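/- arXiv:0801.3802 — 3 statements merged into one kernel-verified Lean document; each statement's English description precedes it below -/
import Mathlib

section
/- Let S be a boolean dynamical system with graph G on finite vertex set V and local transition functions f i. Then S has a fixed point if and only if there exists a family g assigning to each vertex i a configuration g i : V → Bool such that (1) for every vertex i, f i (g i) = g i i, and (2) for every edge {i, j} of G and every vertex k ∈ N⁰(i) ∩ N⁰(j), g i k = g j k. (This is the correctness of the reduction from the fixed-point existence problem to a constraint satisfaction problem whose variables are the vertices, whose domain values at i are the locally consistent assignments to N⁰(i), and whose constraints require agreement on overlapping closed neighborhoods.) -/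
/-- Correctness of the reduction from fixed-point existence to a CSP: the system `S`
given by graph `G` and local transition functions `f` (each depending only on the
closed neighborhood of its vertex) has a fixed point iff there is a family `g`
of locally consistent assignments agreeing on overlapping closed neighborhoods. -/
theorem fixedPoint_iff_csp {V : Type*} [Fintype V] (G : SimpleGraph V)
    (f : V → (V → Bool) → Bool)
    (hloc : ∀ i (x y : V → Bool),
      (∀ k ∈ insert i (G.neighborSet i), x k = y k) → f i x = f i y) :
    (∃ x : V → Bool, ∀ i, f i x = x i) ↔
      ∃ g : V → (V → Bool),
        (∀ i, f i (g i) = g i i) ∧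
        (∀ i j, G.Adj i j →
          ∀ k ∈ (insert i (G.neighborSet i)) ∩ (insert j (G.neighborSet j)),
            g i k = g j k) := by
  constructor
  · rintro ⟨x, hx⟩
    exact ⟨fun _ => x, hx, fun _ _ _ _ _ => rfl⟩
  · rintro ⟨g, hg, hagree⟩
    -- The diagonal `k ↦ g k k` agrees with `g i` on the closed neighborhood of `i`: for a
    -- neighbor `k` of `i`, apply the constraint of the edge `{i, k}` at the vertex `k` itself.
    refine ⟨fun k => g k k, fun i => (hloc i _ (g i) ?_).trans (hg i)⟩
    rintro k (rfl | hk)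
    · rfl
    · exact (hagree i k hk k ⟨Or.inr hk, Or.inl rfl⟩).symm
end

section
/- Let G be a finite simple graph whose vertex type is nonempty. Then there exists a vertex v incident to every edge of G (i.e., G has a vertex cover of size one) if and only if G contains no triangle (no three pairwise adjacent vertices) and no two vertex-disjoint edges (no edges {a,b} and {c,d} with a, b, c, d pairwise distinct such that a is adjacent to b and c is adjacent to d). -/
/-!
The content is the backward direction. Fix an edge `xy`. If `x` is not a cover, some edge misses
`x`; as it must meet `xy`, it is `yp` with `p ≠ x`. If `y` is not a cover either, there is
likewise an edge `xq` with `q ≠ y`. The edges `yp` and `xq` must meet, so `p = q`, and `x, y, p`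
form a triangle.
-/

/-- Without two disjoint edges, if `x` on an edge `xy` fails to be a cover, then some edge at `y`
leads away from `x`. -/
theorem exists_adj_ne_of_not_cover {V : Type*} (G : SimpleGraph V)
    (hdisj : ¬ ∃ a b c d : V, G.Adj a b ∧ G.Adj c d ∧
      a ≠ b ∧ c ≠ d ∧ a ≠ c ∧ a ≠ d ∧ b ≠ c ∧ b ≠ d)
    {x y : V} (hxy : G.Adj x y) (hx : ¬ ∀ a b : V, G.Adj a b → a = x ∨ b = x) :
    ∃ p, G.Adj y p ∧ p ≠ x := by
  push Not at hx
  obtain ⟨a, b, hab, hax, hbx⟩ := hx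
  by_cases hay : a = y
  · exact ⟨b, hay ▸ hab, hbx⟩
  by_cases hby : b = y
  · exact ⟨a, hby ▸ hab.symm, hax⟩
  exact absurd ⟨x, y, a, b, hxy, hab, hxy.ne, hab.ne, Ne.symm hax, Ne.symm hbx,
    Ne.symm hay, Ne.symm hby⟩ hdisj

/-- A finite simple graph on a nonempty vertex type has a vertex cover of size one
(a vertex incident to every edge) iff it contains no triangle and no two
vertex-disjoint edges. -/
theorem vertexCoverOne_iff {V : Type*} [Fintype V] [Nonempty V] (G : SimpleGraph V) :
    (∃ v : V, ∀ a b : V, G.Adj a b → a = v ∨ b = v) ↔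
      (¬ ∃ a b c : V, G.Adj a b ∧ G.Adj b c ∧ G.Adj a c) ∧
      (¬ ∃ a b c d : V, G.Adj a b ∧ G.Adj c d ∧
          a ≠ b ∧ c ≠ d ∧ a ≠ c ∧ a ≠ d ∧ b ≠ c ∧ b ≠ d) := by
  constructor
  · rintro ⟨v, hv⟩
    constructor
    · rintro ⟨a, b, c, hab, hbc, hac⟩
      have := hab.ne
      have := hbc.ne
      have := hac.ne
      grind
    · rintro ⟨a, b, c, d, hab, hcd, -, -, hac, had, hbc, hbd⟩
      grind
  · rintro ⟨htri, hdisj⟩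
    by_cases hedge : ∃ x y, G.Adj x y
    · obtain ⟨x, y, hxy⟩ := hedge
      by_contra hno
      rw [not_exists] at hno
      obtain ⟨p, hyp, hpx⟩ := exists_adj_ne_of_not_cover G hdisj hxy (hno x)
      obtain ⟨q, hxq, hqy⟩ := exists_adj_ne_of_not_cover G hdisj hxy.symm (hno y)
      by_cases hpq : p = q
      · subst hpq
        exact htri ⟨x, y, p, hxy, hyp, hxq⟩
      · exact hdisj ⟨y, p, x, q, hyp, hxq, hyp.ne, hxq.ne, hxy.ne', hqy.symm, hpx, hpq⟩
    · obtain ⟨v⟩ := ‹Nonempty V›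
      exact ⟨v, fun a b hab => absurd ⟨a, b, hab⟩ hedge⟩
end

section
/- Let X be a finite simple graph on vertex type W with a vertex v such that every edge of X is incident to v (a vertex cover of size one), and let G be a simple graph containing a vertex u whose degree is at least (card W) − 1. Then there exists an injective map φ : W → V(G) with φ(v) = u such that for all a, b ∈ W, if a and b are adjacent in X then φ(a) and φ(b) are adjacent in G. In particular, X is isomorphic to a subgraph of G. -/
/-- If `X` has a vertex cover `{v}` of size one and `u` is a vertex of `G` whose degree
is at least `card W - 1`, then `X` embeds into `G` as a subgraph with `v ↦ u`. -/
theorem star_embeds_of_degree {W V : Type*} [Fintype W] [Fintype V]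
    (X : SimpleGraph W) (v : W) (hcov : ∀ a b : W, X.Adj a b → a = v ∨ b = v)
    (G : SimpleGraph V) [DecidableRel G.Adj] (u : V)
    (hdeg : Fintype.card W - 1 ≤ G.degree u) :
    ∃ φ : W → V, Function.Injective φ ∧ φ v = u ∧
      ∀ a b : W, X.Adj a b → G.Adj (φ a) (φ b) := by
  classical
  -- Map `v` to `u` and inject the other `card W - 1` vertices into the neighbors of `u`;
  -- every edge of `X` contains `v`, so it is sent to an edge at `u`.
  have hcard : Fintype.card {w : W // w ≠ v} ≤ Fintype.card (G.neighborSet u) := by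
    rw [G.card_neighborSet_eq_degree u]
    simpa [Fintype.card_subtype_compl] using hdeg
  obtain ⟨f⟩ := Function.Embedding.nonempty_of_card_le hcard
  have hf (w : {w : W // w ≠ v}) : G.Adj u (f w) := (f w).2
  refine ⟨fun w => if h : w = v then u else f ⟨w, h⟩, ?_, by simp, ?_⟩
  · intro a b hab
    by_cases ha : a = v <;> by_cases hb : b = v <;> simp only [ha, hb, dite_true, dite_false] at hab
    · rw [ha, hb]
    · exact absurd hab (hf ⟨b, hb⟩).ne
    · exact absurd hab.symm (hf ⟨a, ha⟩).ne
    · exact congrArg Subtype.val (f.injective (Subtype.ext hab))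
  · intro a b hab
    rcases hcov a b hab with rfl | rfl
    · simpa [hab.ne'] using hf ⟨b, hab.ne'⟩
    · simpa [hab.ne] using (hf ⟨a, hab.ne⟩).symm
end
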